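/- arXiv:1603.08715 — 3 statements merged into one kernel-verified Lean document; each statement's English description precedes it below -/
import Mathlib

section
/- Let d, n, k ≥ 1. A map φ belongs to RTM(ℤ^d,n,k) if and only if φ belongs to TM(ℤ^d,n,k) and φ is bijective. -/
open Function

/-- `ℤ^d`. -/
abbrev V (d : ℕ) : Type := Fin d → ℤ

/-- A head configuration is valid if it carries at most one head. -/
def headOk {d k : ℕ} (y : V d → Option (Fin k)) : Prop :=
  ∀ u v : V d, (y u).isSome → (y v).isSome → u = v

/-- The space `X_{n,k}`: a tape in `Σ^{ℤ^d}` together with at most one head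
carrying a state in `Q = Fin k`. -/
abbrev X (d n k : ℕ) : Type :=
  { c : (V d → Fin n) × (V d → Option (Fin k)) // headOk c.2 }

/-- `DefinedBy F F' f T` : `T` is the moving-head Turing machine defined by the
local rule `f`, reading the tape on the window `F`, writing on the window `F'`,
changing the state and moving the head. -/
def DefinedBy {d n k : ℕ} (F F' : Finset (V d))
    (f : (V d → Fin n) → Fin k → (V d → Fin n) × Fin k × V d)
    (T : X d n k → X d n k) : Prop :=
  -- `f` only depends on the restriction of the tape to `F`, and only the
  -- restriction of its tape output to `F'` matters:
  (∀ x x' q, (∀ v ∈ F, x v = x' v) →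
      (∀ v ∈ F', (f x q).1 v = (f x' q).1 v) ∧ (f x q).2 = (f x' q).2) ∧
  -- a configuration with no head is fixed:
  (∀ c : X d n k, (∀ v, c.val.2 v = none) → T c = c) ∧
  -- if the head is at `v` in state `q`, apply the local rule there:
  (∀ (c : X d n k) (v : V d) (q : Fin k), c.val.2 v = some q →
    (∀ t, (T c).val.1 t =
      if t - v ∈ F' then (f (fun u => c.val.1 (u + v)) q).1 (t - v) else c.val.1 t) ∧
    (∀ t, (T c).val.2 t =
      if t = v + (f (fun u => c.val.1 (u + v)) q).2.2
      then some (f (fun u => c.val.1 (u + v)) q).2.1 else none))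

/-- A moving-head `(d,n,k)`-Turing machine. -/
def IsTM {d n k : ℕ} (T : X d n k → X d n k) : Prop :=
  ∃ F F' f, DefinedBy F F' f T

/-- A reversible moving-head Turing machine: a Turing machine admitting a
Turing machine inverse. -/
def IsRTM {d n k : ℕ} (T : X d n k → X d n k) : Prop :=
  IsTM T ∧ ∃ S : X d n k → X d n k, IsTM S ∧ S ∘ T = id ∧ T ∘ S = id

def mkX {d n k : ℕ} (x : V d → Fin n) (v : V d) (q : Fin k) : X d n k :=
  ⟨(x, fun t => if t = v then some q else none), by
    intro a b ha hb
    by_cases h1 : a = v <;> by_cases h2 : b = v <;> simp_all⟩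

theorem mkX_inj {d n k : ℕ} {x x' : V d → Fin n} {v v' : V d} {q q' : Fin k}
    (h : mkX x v q = mkX x' v' q') : x = x' ∧ v = v' ∧ q = q' := by
  have h1 := congrArg (fun c => c.val.1) h
  have h2 := congrFun (congrArg (fun c => c.val.2) h) v
  simp only [mkX] at h1 h2
  refine ⟨h1, ?_⟩
  by_cases h3 : v = v' <;> simp_all

theorem eq_mkX {d n k : ℕ} (c : X d n k) (v : V d) (q : Fin k) (h : c.val.2 v = some q) :
    c = mkX c.val.1 v q := by
  apply Subtype.ext
  apply Prod.ext
  · rfl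
  · funext t
    by_cases ht : t = v
    · subst ht; simp [mkX, h]
    · simp only [mkX, if_neg ht]
      by_contra hne
      exact ht (c.2 t v (Option.isSome_iff_ne_none.2 hne) (by simp [h]))

theorem T_mkX {d n k : ℕ} {F F' : Finset (V d)}
    {f : (V d → Fin n) → Fin k → (V d → Fin n) × Fin k × V d}
    {T : X d n k → X d n k} (hT : DefinedBy F F' f T) (x : V d → Fin n) (v : V d) (q : Fin k) :
    T (mkX x v q) = mkX (fun t => if t - v ∈ F' then (f (fun u => x (u + v)) q).1 (t - v) else x t)
      (v + (f (fun u => x (u + v)) q).2.2) (f (fun u => x (u + v)) q).2.1 := by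
  obtain ⟨h1, h2⟩ := hT.2.2 (mkX x v q) v q (by simp [mkX])
  apply Subtype.ext
  apply Prod.ext
  · funext t; exact h1 t
  · funext t; exact h2 t

theorem moves_finite {d n k : ℕ} (hn : 1 ≤ n) {F F' : Finset (V d)}
    {f : (V d → Fin n) → Fin k → (V d → Fin n) × Fin k × V d}
    {T : X d n k → X d n k} (hT : DefinedBy F F' f T) :
    (Set.range (fun a : (V d → Fin n) × Fin k => (f a.1 a.2).2.2)).Finite := by
  classical
  let g : (F → Fin n) × Fin k → V d := fun a =>
    (f (fun v => if h : v ∈ F then a.1 ⟨v, h⟩ else ⟨0, hn⟩) a.2).2.2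
  refine (Set.finite_range g).subset ?_
  rintro _ ⟨⟨x, q⟩, rfl⟩
  refine ⟨(fun v => x v, q), ?_⟩
  have := (hT.1 (fun v => if h : v ∈ F then x v else ⟨0, hn⟩) x q
    (by intro v hv; simp [hv])).2
  exact congrArg Prod.snd this

theorem inv_isTM {d n k : ℕ} (hn : 1 ≤ n) {T S : X d n k → X d n k} (hT : IsTM T)
    (hl : ∀ c, S (T c) = c) (hr : ∀ c, T (S c) = c) : IsTM S := by
  classical
  obtain ⟨F, F', f, hD⟩ := hT
  have hinj : ∀ a b, T a = T b → a = b := fun a b h => by rw [← hl a, h, hl]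
  have hex : ∀ (y : V d → Fin n) (q : Fin k), ∃ w : (V d → Fin n) × Fin k × V d,
      T (mkX w.1 w.2.2 w.2.1) = mkX y 0 q := by
    intro y q
    by_cases hh : ∀ v, (S (mkX y 0 q)).val.2 v = none
    · exfalso
      have h1 := hD.2.1 _ hh
      rw [hr] at h1
      have h2 := hh 0
      rw [← h1] at h2
      simp [mkX] at h2
    · push Not at hh
      obtain ⟨v, hv⟩ := hh
      obtain ⟨p, hp⟩ := Option.ne_none_iff_exists'.1 hv
      exact ⟨((S (mkX y 0 q)).val.1, p, v), by
        rw [← eq_mkX _ v p hp, hr]⟩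
  choose g hg using hex
  have key : ∀ y q,
      (∀ t, (if t - (g y q).2.2 ∈ F' then
        (f (fun u => (g y q).1 (u + (g y q).2.2)) (g y q).2.1).1 (t - (g y q).2.2)
        else (g y q).1 t) = y t) ∧
      (g y q).2.2 + (f (fun u => (g y q).1 (u + (g y q).2.2)) (g y q).2.1).2.2 = 0 ∧
      (f (fun u => (g y q).1 (u + (g y q).2.2)) (g y q).2.1).2.1 = q := by
    intro y q
    have h := hg y q
    rw [T_mkX hD] at h
    obtain ⟨h1, h2, h3⟩ := mkX_inj h
    exact ⟨fun t => congrFun h1 t, h2, h3⟩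
  let M : Finset (V d) := (moves_finite hn hD).toFinset
  let W : Finset (V d) := M.biUnion fun m => (F ∪ F').image fun u => u - m
  have hW : ∀ y q u, u ∈ F ∪ F' → u + (g y q).2.2 ∈ W := by
    intro y q u hu
    obtain ⟨-, h2, -⟩ := key y q
    refine Finset.mem_biUnion.2
      ⟨(f (fun u => (g y q).1 (u + (g y q).2.2)) (g y q).2.1).2.2, ?_, ?_⟩
    · simp only [M, Set.Finite.mem_toFinset]
      exact ⟨((fun u => (g y q).1 (u + (g y q).2.2)), (g y q).2.1), rfl⟩
    · refine Finset.mem_image.2 ⟨u, hu, ?_⟩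
      rw [sub_eq_add_neg, ← eq_neg_of_add_eq_zero_left h2]
  have hWF' : ∀ y q t, t - (g y q).2.2 ∈ F' → t ∈ W := by
    intro y q t ht
    have := hW y q _ (Finset.mem_union_right F ht)
    simpa using this
  refine ⟨W, W, g, ?_, ?_, ?_⟩
  · intro y y' q hyy
    obtain ⟨k1, k2, k3⟩ := key y q
    let z : V d → Fin n := fun t => if t ∈ W then (g y q).1 t else y' t
    have hz : T (mkX z (g y q).2.2 (g y q).2.1) = mkX y' 0 q := by
      rw [T_mkX hD]
      have hloc := hD.1 (fun u => z (u + (g y q).2.2))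
        (fun u => (g y q).1 (u + (g y q).2.2)) (g y q).2.1 (by
          intro v hv
          simp only [z]
          rw [if_pos (hW y q v (Finset.mem_union_left _ hv))])
      rw [hloc.2, k2, k3]
      congr 1
      funext t
      have k1t := k1 t
      by_cases ht : t - (g y q).2.2 ∈ F'
      · rw [if_pos ht] at k1t ⊢
        rw [hloc.1 _ ht, k1t]
        exact hyy t (hWF' y q t ht)
      · rw [if_neg ht] at k1t ⊢
        by_cases htW : t ∈ W
        · simp only [z, if_pos htW]
          rw [k1t]; exact hyy t htW
        · simp only [z, if_neg htW]
    obtain ⟨e1, e2, e3⟩ := mkX_inj (hinj _ _ (hz.trans (hg y' q).symm))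
    refine ⟨?_, Prod.ext e3 e2⟩
    intro v hv
    rw [← e1]
    simp only [z, if_pos hv]
  · intro c hc
    have := hD.2.1 c hc
    rw [← this, hl, this]
  · intro c v q hc
    have hcm := eq_mkX c v q hc
    set y : V d → Fin n := fun u => c.val.1 (u + v) with hy
    obtain ⟨k1, k2, k3⟩ := key y q
    have hS : S c = mkX (fun t => (g y q).1 (t - v)) (v + (g y q).2.2) (g y q).2.1 := by
      apply hinj
      rw [hr, T_mkX hD]
      have e : (fun u => (fun t => (g y q).1 (t - v)) (u + (v + (g y q).2.2)))
          = fun u => (g y q).1 (u + (g y q).2.2) := by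
        funext u
        exact congrArg (g y q).1 (show u + (v + (g y q).2.2) - v = u + (g y q).2.2 by
          rw [add_left_comm, add_sub_cancel_left])
      rw [e, add_assoc, k2, k3, add_zero]
      refine hcm.trans ?_
      congr 1
      funext t
      have := k1 (t - v)
      rw [sub_sub] at this
      rw [this]
      simp [hy]
    rw [hS]
    refine ⟨?_, fun t => rfl⟩
    intro t
    show (g y q).1 (t - v) = _
    split_ifs with h
    · rfl
    · have := k1 (t - v)
      rw [if_neg (fun h' => h (hWF' y q _ h'))] at this
      rw [this]; simp [hy]

/-- A map belongs to `RTM(ℤ^d,n,k)` iff it belongs to `TM(ℤ^d,n,k)` and is bijective. -/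
theorem rtm_iff_tm_and_bijective (d n k : ℕ) (hd : 1 ≤ d) (hn : 1 ≤ n) (hk : 1 ≤ k)
    (T : X d n k → X d n k) :
    IsRTM T ↔ IsTM T ∧ Function.Bijective T := by
  constructor
  · rintro ⟨hT, S, -, h1, h2⟩
    exact ⟨hT, Function.bijective_iff_has_inverse.2 ⟨S, congrFun h1, congrFun h2⟩⟩
  · rintro ⟨hT, hb⟩
    obtain ⟨S, hl, hr⟩ := Function.bijective_iff_has_inverse.1 hb
    exact ⟨hT, S, inv_isTM hn hT hl hr, funext hl, funext hr⟩
end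

section
/- Let d, n, k ≥ 1 and let T ∈ TM_fix(ℤ^d,n,k). The following are equivalent: (1) T is injective; (2) T is surjective; (3) T is bijective, i.e. T ∈ RTM_fix(ℤ^d,n,k); (4) μ(T^{-1}(A)) = μ(A) for every Borel set A ⊆ Σ^{ℤ^d} × Q; (5) μ(T(A)) = μ(A) for every Borel set A ⊆ Σ^{ℤ^d} × Q. -/
open Function

/-- The configuration space `Σ^{ℤ^d} × Q` of the moving-tape model. -/
abbrev Cfg (d n k : ℕ) : Type := (V d → Fin n) × Fin k

/-- `TapeDefinedBy F F' f T` : `T` is the moving-tape Turing machine defined by the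
local rule `f`: if `f(x|_F, q) = (p, q', u)` then `T(x,q) = (σ_u y, q')` where `y`
agrees with `x` outside `F'` and equals `p` on `F'`. -/
def TapeDefinedBy {d n k : ℕ} (F F' : Finset (V d))
    (f : (V d → Fin n) → Fin k → (V d → Fin n) × Fin k × V d)
    (T : Cfg d n k → Cfg d n k) : Prop :=
  -- `f` only depends on the restriction of the tape to `F`, and only the
  -- restriction of its tape output to `F'` matters:
  (∀ x x' q, (∀ v ∈ F, x v = x' v) →
      (∀ v ∈ F', (f x q).1 v = (f x' q).1 v) ∧ (f x q).2 = (f x' q).2) ∧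
  -- the machine equation:
  (∀ (x : V d → Fin n) (q : Fin k),
    (T (x, q)).2 = (f x q).2.1 ∧
    ∀ t, (T (x, q)).1 t =
      if t - (f x q).2.2 ∈ F' then (f x q).1 (t - (f x q).2.2)
      else x (t - (f x q).2.2))

/-- A moving-tape `(d,n,k)`-Turing machine. -/
def IsTMfix {d n k : ℕ} (T : Cfg d n k → Cfg d n k) : Prop :=
  ∃ F F' f, TapeDefinedBy F F' f T

/-- The sup-norm `‖v‖_∞` of `v ∈ ℤ^d`, as a natural number. -/
def supnorm {d : ℕ} (v : V d) : ℕ := Finset.univ.sup fun i => (v i).natAbs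


section helpers
open MeasureTheory

def cyl {d n k : ℕ} (F : Finset (V d)) (z : Cfg d n k) : Set (Cfg d n k) :=
  {c | c.2 = z.2 ∧ ∀ v ∈ F, c.1 v = z.1 v}

def resF {d n k : ℕ} (F : Finset (V d)) (c : Cfg d n k) : (F → Fin n) × Fin k :=
  (fun v => c.1 v, c.2)

theorem resF_eq_iff {d n k : ℕ} (F : Finset (V d)) (c z : Cfg d n k) :
    resF F c = resF F z ↔ c ∈ cyl F z := by
  constructor
  · intro h
    have h1 := congrArg Prod.fst h
    have h2 := congrArg Prod.snd h
    exact ⟨h2, fun v hv => congrFun h1 ⟨v, hv⟩⟩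
  · rintro ⟨h1, h2⟩
    exact Prod.ext (funext fun v => h2 v v.2) h1

theorem resF_surj {d n k : ℕ} (hn : 1 ≤ n) (F : Finset (V d)) :
    Surjective (resF F : Cfg d n k → _) := by
  rintro ⟨p, q⟩
  classical
  refine ⟨(fun v => if h : v ∈ F then p ⟨v, h⟩ else ⟨0, hn⟩, q), ?_⟩
  refine Prod.ext (funext fun v => ?_) rfl
  simp [resF]

theorem resF_meas {d n k : ℕ} (F : Finset (V d)) :
    Measurable (resF F : Cfg d n k → _) := by
  unfold resF
  fun_prop

theorem resF_mono {d n k : ℕ} {F G : Finset (V d)} (h : F ⊆ G) {c z : Cfg d n k}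
    (hc : resF G c = resF G z) : resF F c = resF F z := by
  rw [resF_eq_iff] at *
  exact ⟨hc.1, fun v hv => hc.2 v (h hv)⟩

theorem cyl_meas {d n k : ℕ} (F : Finset (V d)) (z : Cfg d n k) : MeasurableSet (cyl F z) := by
  have : cyl F z = resF F ⁻¹' {resF F z} := by
    ext c; simp [resF_eq_iff]
  rw [this]
  exact resF_meas F (measurableSet_singleton _)

/-- A set depending on finitely many coordinates. -/
def IsLoc {d n k : ℕ} (U : Set (Cfg d n k)) : Prop :=
  ∃ F : Finset (V d), ∀ c z : Cfg d n k, resF F c = resF F z → c ∈ U → z ∈ U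

theorem IsLoc.eq_preimage {d n k : ℕ} {U : Set (Cfg d n k)} {F : Finset (V d)}
    (h : ∀ c z : Cfg d n k, resF F c = resF F z → c ∈ U → z ∈ U) :
    U = resF F ⁻¹' (resF F '' U) := by
  ext c
  constructor
  · intro hc; exact ⟨c, hc, rfl⟩
  · rintro ⟨z, hz, e⟩; exact h _ _ e hz

theorem IsLoc.meas {d n k : ℕ} {U : Set (Cfg d n k)} (hU : IsLoc U) : MeasurableSet U := by
  obtain ⟨F, h⟩ := hU
  rw [IsLoc.eq_preimage h]
  exact resF_meas F (Set.toFinite _).measurableSet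

theorem IsLoc.compl {d n k : ℕ} {U : Set (Cfg d n k)} (hU : IsLoc U) : IsLoc Uᶜ := by
  obtain ⟨F, h⟩ := hU
  exact ⟨F, fun c z e hc hz => hc (h _ _ e.symm hz)⟩

theorem IsLoc.inter {d n k : ℕ} {U W : Set (Cfg d n k)} (hU : IsLoc U) (hW : IsLoc W) :
    IsLoc (U ∩ W) := by
  classical
  obtain ⟨F, h⟩ := hU
  obtain ⟨G, h'⟩ := hW
  exact ⟨F ∪ G, fun c z e hc => ⟨h _ _ (resF_mono Finset.subset_union_left e) hc.1,
    h' _ _ (resF_mono Finset.subset_union_right e) hc.2⟩⟩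

theorem IsLoc.iUnion {d n k : ℕ} {ι : Type*} [Fintype ι] {U : ι → Set (Cfg d n k)}
    (hU : ∀ i, IsLoc (U i)) : IsLoc (⋃ i, U i) := by
  classical
  choose F h using hU
  refine ⟨Finset.univ.biUnion F, fun c z e hc => ?_⟩
  obtain ⟨i, hi⟩ := Set.mem_iUnion.1 hc
  exact Set.mem_iUnion.2 ⟨i, h i _ _
    (resF_mono (Finset.subset_biUnion_of_mem F (Finset.mem_univ i)) e) hi⟩

theorem cyl_loc {d n k : ℕ} (F : Finset (V d)) (z : Cfg d n k) : IsLoc (cyl F z) := by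
  refine ⟨F, fun c w e hc => ?_⟩
  rw [← resF_eq_iff] at *
  rw [← e, hc]

theorem loc_gen {d n k : ℕ} (F0 : Finset (V d)) :
    (inferInstance : MeasurableSpace (Cfg d n k)) = MeasurableSpace.generateFrom
      {U | ∃ F : Finset (V d), F0 ⊆ F ∧ ∃ S, U = resF F ⁻¹' S} := by
  classical
  apply le_antisymm
  · set m := MeasurableSpace.generateFrom
      {U : Set (Cfg d n k) | ∃ F : Finset (V d), F0 ⊆ F ∧ ∃ S, U = resF F ⁻¹' S} with hm
    have h1 : @Measurable _ _ m _ (fun c : Cfg d n k => c.1) := by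
      refine @measurable_pi_lambda _ _ _ m _ _ fun v => ?_
      intro S _
      refine MeasurableSpace.measurableSet_generateFrom
        ⟨insert v F0, Finset.subset_insert _ _, {p | p.1 ⟨v, Finset.mem_insert_self _ _⟩ ∈ S}, rfl⟩
    have h2 : @Measurable _ _ m _ (fun c : Cfg d n k => c.2) := by
      intro S _
      exact MeasurableSpace.measurableSet_generateFrom
        ⟨F0, subset_rfl, {p | p.2 ∈ S}, rfl⟩
    exact sup_le h1.comap_le h2.comap_le
  · apply MeasurableSpace.generateFrom_le
    rintro _ ⟨F, _, S, rfl⟩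
    exact resF_meas F (Set.toFinite S).measurableSet

theorem meas_ext {d n k : ℕ} (hn : 1 ≤ n) (F0 : Finset (V d)) (ν₁ ν₂ : Measure (Cfg d n k))
    [IsFiniteMeasure ν₁]
    (h : ∀ F z, F0 ⊆ F → ν₁ (cyl F z) = ν₂ (cyl F z)) : ν₁ = ν₂ := by
  classical
  have key : ∀ F : Finset (V d), F0 ⊆ F → ν₁.map (resF F) = ν₂.map (resF F) := by
    intro F hF
    refine Measure.ext_of_singleton fun p => ?_
    obtain ⟨z, rfl⟩ := resF_surj hn F p
    have : resF F ⁻¹' {resF F z} = cyl F z := by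
      ext c; simp [resF_eq_iff]
    rw [Measure.map_apply (resF_meas F) (measurableSet_singleton _),
      Measure.map_apply (resF_meas F) (measurableSet_singleton _), this, h F z hF]
  have key2 : ∀ F : Finset (V d), F0 ⊆ F → ∀ S, ν₁ (resF F ⁻¹' S) = ν₂ (resF F ⁻¹' S) := by
    intro F hF S
    have hS : MeasurableSet S := (Set.toFinite S).measurableSet
    rw [← Measure.map_apply (resF_meas F) hS, ← Measure.map_apply (resF_meas F) hS, key F hF]
  refine ext_of_generate_finite _ (loc_gen F0) ?_ ?_ ?_
  · rintro _ ⟨F, hF, S, rfl⟩ _ ⟨G, hG, S', rfl⟩ _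
    refine ⟨F ∪ G, hF.trans Finset.subset_union_left,
      resF (F ∪ G) '' (resF F ⁻¹' S ∩ resF G ⁻¹' S'), ?_⟩
    apply IsLoc.eq_preimage
    rintro c z e ⟨h1, h2⟩
    have e1 := resF_mono (Finset.subset_union_left (s₁ := F) (s₂ := G)) e
    have e2 := resF_mono (Finset.subset_union_right (s₁ := F) (s₂ := G)) e
    exact ⟨by simpa [← e1] using h1, by simpa [← e2] using h2⟩
  · rintro _ ⟨F, hF, S, rfl⟩
    exact key2 F hF S
  · have := key2 F0 subset_rfl Set.univ
    simpa using this

/-- Structure of a machine. -/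
def Str {d n k : ℕ} (E : Finset (V d)) (u : Cfg d n k → V d) (T : Cfg d n k → Cfg d n k) : Prop :=
  ∀ c0 c : Cfg d n k, c ∈ cyl E c0 → u c = u c0 ∧ (T c).2 = (T c0).2 ∧
    (∀ t ∈ E, (T c).1 (t + u c0) = (T c0).1 (t + u c0)) ∧
    ∀ t, t ∉ E → (T c).1 (t + u c0) = c.1 t

theorem exists_str {d n k : ℕ} {T : Cfg d n k → Cfg d n k} (hT : IsTMfix T) :
    ∃ E u, Str E u T := by
  classical
  obtain ⟨F, F', f, h1, h2⟩ := hT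
  refine ⟨F ∪ F', fun c => (f c.1 c.2).2.2, ?_⟩
  rintro ⟨x0, q0⟩ ⟨x, q⟩ ⟨hq, hx⟩
  simp only at hq hx
  subst hq
  obtain ⟨h3, h4⟩ := h1 x x0 q (fun v hv => hx v (Finset.mem_union_left _ hv))
  obtain ⟨a1, a2⟩ := h2 x q
  obtain ⟨b1, b2⟩ := h2 x0 q
  refine ⟨by simp [h4], by rw [a1, b1, h4], fun t ht => ?_, fun t ht => ?_⟩
  · rw [a2, b2, h4]
    simp only [add_sub_cancel_right]
    split_ifs with h
    · exact h3 t h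
    · exact hx t ht
  · rw [a2, h4]
    simp only [add_sub_cancel_right]
    rw [if_neg fun h => ht (Finset.mem_union_right _ h)]

def Dset {d n k : ℕ} (E : Finset (V d)) (u : Cfg d n k → V d) (T : Cfg d n k → Cfg d n k)
    (c0 : Cfg d n k) : Set (Cfg d n k) := cyl (E.map (addRightEmbedding (u c0))) (T c0)

theorem mem_Dset {d n k : ℕ} {E : Finset (V d)} {u : Cfg d n k → V d} {T : Cfg d n k → Cfg d n k}
    {c0 c : Cfg d n k} : c ∈ Dset E u T c0 ↔ 
      c.2 = (T c0).2 ∧ ∀ v ∈ E, c.1 (v + u c0) = (T c0).1 (v + u c0) := by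
  simp [Dset, cyl]

theorem maps_D {d n k : ℕ} {E : Finset (V d)} {u : Cfg d n k → V d} {T : Cfg d n k → Cfg d n k}
    (h : Str E u T) {c0 c : Cfg d n k} (hc : c ∈ cyl E c0) : T c ∈ Dset E u T c0 := by
  obtain ⟨-, h1, h2, -⟩ := h c0 c hc
  exact mem_Dset.2 ⟨h1, h2⟩

theorem surj_D {d n k : ℕ} {E : Finset (V d)} {u : Cfg d n k → V d} {T : Cfg d n k → Cfg d n k}
    (h : Str E u T) {c0 y : Cfg d n k} (hy : y ∈ Dset E u T c0) : ∃ c ∈ cyl E c0, T c = y := by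
  classical
  rw [mem_Dset] at hy
  have hc : ((fun v => if v ∈ E then c0.1 v else y.1 (v + u c0), c0.2) : Cfg d n k) ∈ cyl E c0 :=
    ⟨rfl, fun v hv => by simp [hv]⟩
  refine ⟨_, hc, ?_⟩
  obtain ⟨-, h1, h2, h3⟩ := h c0 _ hc
  refine Prod.ext (funext fun t => ?_) (h1.trans hy.1.symm)
  obtain ⟨s, rfl⟩ : ∃ s, t = s + u c0 := ⟨t - u c0, by simp⟩
  by_cases hs : s ∈ E
  · rw [h2 s hs, hy.2 s hs]
  · rw [h3 s hs]; simp [hs]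

theorem inj_C {d n k : ℕ} {E : Finset (V d)} {u : Cfg d n k → V d} {T : Cfg d n k → Cfg d n k}
    (h : Str E u T) {c0 a b : Cfg d n k} (ha : a ∈ cyl E c0) (hb : b ∈ cyl E c0)
    (e : T a = T b) : a = b := by
  refine Prod.ext (funext fun t => ?_) (ha.1.trans hb.1.symm)
  by_cases hs : t ∈ E
  · rw [ha.2 t hs, hb.2 t hs]
  · rw [← (h c0 a ha).2.2.2 t hs, ← (h c0 b hb).2.2.2 t hs, e]

theorem T_meas {d n k : ℕ} (hn : 1 ≤ n) {E : Finset (V d)} {u : Cfg d n k → V d}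
    {T : Cfg d n k → Cfg d n k} (h : Str E u T) : Measurable T := by
  classical
  choose rep hrep using resF_surj (k := k) hn E
  refine Measurable.prodMk (measurable_pi_lambda _ fun t => ?_) ?_
  · intro S _
    apply IsLoc.meas
    refine ⟨E ∪ Finset.univ.image (fun i => t - u (rep i)), fun c z e hc => ?_⟩
    have e1 := resF_mono Finset.subset_union_left e
    have hc0 : c ∈ cyl E (rep (resF E c)) := by rw [← resF_eq_iff, hrep]
    have hz0 : z ∈ cyl E (rep (resF E c)) := by rw [← resF_eq_iff, hrep, e1]
    generalize hi : rep (resF E c) = w at *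
    have e3 := (resF_eq_iff _ _ _).1 e
    have : c.1 (t - u w) = z.1 (t - u w) := by
      apply e3.2
      apply Finset.mem_union_right
      rw [← hi]
      exact Finset.mem_image_of_mem _ (Finset.mem_univ _)
    have e4 : (T z).1 t = (T c).1 t := by
      have hh : t = (t - u w) + u w := by simp
      rw [hh]
      by_cases hs : t - u w ∈ E
      · rw [(h w z hz0).2.2.1 _ hs, (h w c hc0).2.2.1 _ hs]
      · rw [(h w z hz0).2.2.2 _ hs, (h w c hc0).2.2.2 _ hs, this]
    simpa [e4] using hc
  · intro S _
    apply IsLoc.meas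
    refine ⟨E, fun c z e hc => ?_⟩
    have := (h z c ((resF_eq_iff _ _ _).1 e)).2.1
    simpa [← this] using hc

theorem key_b {d n k : ℕ} (hn : 1 ≤ n)
    (μ : Measure (Cfg d n k)) [IsFiniteMeasure μ]
    (hμ : ∀ (F : Finset (V d)) (z : Cfg d n k),
      μ (cyl F z) = 1 / ((k : ENNReal) * (n : ENNReal) ^ F.card))
    {E : Finset (V d)} {u : Cfg d n k → V d}
    {T : Cfg d n k → Cfg d n k} (h : Str E u T) (c0 : Cfg d n k) {A : Set (Cfg d n k)}
    (hA : MeasurableSet A) : μ (T ⁻¹' A ∩ cyl E c0) = μ (A ∩ Dset E u T c0) := by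
  classical
  have hTm := T_meas hn h
  have main : (μ.restrict (cyl E c0)).map T = μ.restrict (Dset E u T c0) := by
    refine meas_ext hn (E.map (addRightEmbedding (u c0))) _ _ fun F z hF => ?_
    rw [Measure.map_apply hTm (cyl_meas F z), Measure.restrict_apply (hTm (cyl_meas F z)),
      Measure.restrict_apply (cyl_meas F z)]
    have hF' : ∀ v ∈ E, v + u c0 ∈ F := fun v hv => hF (by simpa using hv)
    by_cases hz : z ∈ Dset E u T c0
    · have r : cyl F z ∩ Dset E u T c0 = cyl F z := by
        apply Set.inter_eq_left.2
        intro c hc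
        rw [mem_Dset] at hz ⊢
        exact ⟨hc.1.trans hz.1, fun v hv => (hc.2 _ (hF' v hv)).trans (hz.2 v hv)⟩
      obtain ⟨w, hw, hwz⟩ := surj_D h hz
      have l : T ⁻¹' (cyl F z) ∩ cyl E c0 = cyl (F.map (addRightEmbedding (-u c0))) w := by
        ext c
        constructor
        · rintro ⟨h1, h2⟩
          refine ⟨h2.1.trans hw.1.symm, fun v hv => ?_⟩
          by_cases hs : v ∈ E
          · rw [h2.2 v hs, hw.2 v hs]
          · have hv' : v + u c0 ∈ F := by
              simp only [Finset.mem_map, addRightEmbedding_apply] at hv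
              obtain ⟨a, ha, rfl⟩ := hv
              simpa using ha
            rw [← (h c0 c h2).2.2.2 v hs, ← (h c0 w hw).2.2.2 v hs, hwz]
            exact h1.2 _ hv'
        · rintro ⟨h1, h2⟩
          have hm : ∀ v, v + u c0 ∈ F → c.1 v = w.1 v := fun v hv =>
            h2 v (by
              simp only [Finset.mem_map, addRightEmbedding_apply]
              exact ⟨_, hv, by simp⟩)
          have hc : c ∈ cyl E c0 := ⟨h1.trans hw.1, fun v hv =>
            (hm v (hF' v hv)).trans (hw.2 v hv)⟩
          refine ⟨⟨?_, fun t ht => ?_⟩, hc⟩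
          · rw [← hwz, (h c0 c hc).2.1, (h c0 w hw).2.1]
          · obtain ⟨s, rfl⟩ : ∃ s, t = s + u c0 := ⟨t - u c0, by simp⟩
            rw [← hwz]
            by_cases hs : s ∈ E
            · rw [(h c0 c hc).2.2.1 s hs, (h c0 w hw).2.2.1 s hs]
            · rw [(h c0 c hc).2.2.2 s hs, (h c0 w hw).2.2.2 s hs, hm s ht]
      rw [r, l, hμ, hμ, Finset.card_map]
    · have gen : ∀ c, c ∈ cyl F z → c ∉ Dset E u T c0 := by
        intro c hc hc'
        apply hz
        rw [mem_Dset] at hc' ⊢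
        exact ⟨hc.1.symm.trans hc'.1, fun v hv =>
          (hc.2 _ (hF' v hv)).symm.trans (hc'.2 v hv)⟩
      have r : cyl F z ∩ Dset E u T c0 = ∅ := by
        ext c; simpa using gen c
      have l : T ⁻¹' (cyl F z) ∩ cyl E c0 = ∅ := by
        ext c
        simp only [Set.mem_inter_iff, Set.mem_preimage, Set.mem_empty_iff_false, iff_false, not_and]
        exact fun h1 h2 => gen _ h1 (maps_D h h2)
      rw [r, l]
  have := congrArg (fun ν => ν A) main
  rwa [Measure.map_apply hTm hA, Measure.restrict_apply (hTm hA),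
      Measure.restrict_apply hA] at this

theorem sum_part {α ι : Type*} [MeasurableSpace α] [Fintype ι] (μ : Measure α)
    (C : ι → Set α) (hC : ∀ i, MeasurableSet (C i)) (hd : Pairwise (Disjoint on C))
    (hu : ⋃ i, C i = Set.univ) {A : Set α} (hA : MeasurableSet A) :
    μ A = ∑ i, μ (A ∩ C i) := by
  rw [← tsum_fintype (L := .unconditional ι), ← measure_iUnion _ (fun i => hA.inter (hC i)),
    ← Set.inter_iUnion, hu, Set.inter_univ]
  intro i j hij
  exact (hd hij).mono Set.inter_subset_right Set.inter_subset_right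

end helpers

open MeasureTheory in
/-- For a moving-tape Turing machine `T` the following are equivalent:
injectivity, surjectivity, bijectivity (i.e. membership in `RTM_fix`),
preservation of the uniform measure `μ` in the backward sense, and in the
forward sense.  Here `μ` is the uniform measure, characterized on cylinders by
`μ([p]_F × {q}) = 1/(k·n^{|F|})`. -/
theorem injective_surjective_reversible (d n k : ℕ) (hd : 1 ≤ d) (hn : 1 ≤ n) (hk : 1 ≤ k)
    (μ : Measure (Cfg d n k))
    (hμ : ∀ (F : Finset (V d)) (p : V d → Fin n) (q : Fin k),
      μ {c : Cfg d n k | c.2 = q ∧ ∀ v ∈ F, c.1 v = p v} =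
        1 / ((k : ENNReal) * (n : ENNReal) ^ F.card))
    (T : Cfg d n k → Cfg d n k) (hT : IsTMfix T) :
    List.TFAE [
      Function.Injective T,
      Function.Surjective T,
      Function.Bijective T,
      ∀ A : Set (Cfg d n k), MeasurableSet A → μ (T ⁻¹' A) = μ A,
      ∀ A : Set (Cfg d n k), MeasurableSet A → μ (T '' A) = μ A] := by
  classical
  have hμ' : ∀ (F : Finset (V d)) (z : Cfg d n k),
      μ (cyl F z) = 1 / ((k : ENNReal) * (n : ENNReal) ^ F.card) :=
    fun F z => hμ F z.1 z.2
  obtain ⟨E, u, h⟩ := exists_str hT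
  have hTm := T_meas hn h
  choose rep hrep using resF_surj (k := k) hn E
  set C : ((E → Fin n) × Fin k) → Set (Cfg d n k) := fun i => cyl E (rep i) with hC
  set D : ((E → Fin n) × Fin k) → Set (Cfg d n k) := fun i => Dset E u T (rep i) with hD
  have memC : ∀ c i, c ∈ C i ↔ resF E c = i := fun c i => by
    rw [hC]; simp only; rw [← resF_eq_iff, hrep]
  have Cm : ∀ i, MeasurableSet (C i) := fun i => cyl_meas _ _
  have Dloc : ∀ i, IsLoc (D i) := fun i => cyl_loc _ _
  have Dm : ∀ i, MeasurableSet (D i) := fun i => (Dloc i).meas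
  have Cu : ⋃ i, C i = Set.univ := by
    ext c; simp [memC]
  have Cd : Pairwise (Disjoint on C) := by
    intro i j hij
    refine Set.disjoint_left.2 fun c hc hc' => hij ?_
    rw [memC] at hc hc'
    rw [← hc, hc']
  have Cfin : ∀ i, μ (C i) ≠ ⊤ := by
    intro i
    rw [hC]; simp only
    rw [hμ']
    refine ENNReal.div_ne_top ENNReal.one_ne_top (mul_ne_zero ?_ (pow_ne_zero _ ?_)) <;>
      simp only [ne_eq, Nat.cast_eq_zero] <;> lia
  have fin : IsFiniteMeasure μ := by
    constructor
    rw [sum_part μ C Cm Cd Cu MeasurableSet.univ]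
    simp only [Set.univ_inter]
    exact ENNReal.sum_lt_top.2 fun i _ => (Cfin i).lt_top
  have null : ∀ U : Set (Cfg d n k), IsLoc U → μ U = 0 → U = ∅ := by
    rintro U ⟨F, hF⟩ h0
    by_contra hne
    obtain ⟨z, hz⟩ := Set.nonempty_iff_ne_empty.2 hne
    have hsub : cyl F z ⊆ U := fun c hc => hF z c ((resF_eq_iff _ _ _).2 hc).symm hz
    have h1 := measure_mono_null hsub h0
    rw [hμ'] at h1
    refine (ENNReal.div_pos one_ne_zero ?_).ne' h1
    exact ENNReal.mul_ne_top (ENNReal.natCast_ne_top _)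
      (ENNReal.pow_ne_top (ENNReal.natCast_ne_top _))
  have pre : ∀ A, MeasurableSet A → μ (T ⁻¹' A) = ∑ i, μ (A ∩ D i) := by
    intro A hA
    rw [sum_part μ C Cm Cd Cu (hTm hA)]
    exact Finset.sum_congr rfl fun i _ => key_b hn μ hμ' h (rep i) hA
  have tot : ∑ i, μ (D i) = μ Set.univ := by
    have := pre Set.univ MeasurableSet.univ
    simpa using this.symm
  have rng : Set.range T = ⋃ i, D i := by
    ext y
    simp only [Set.mem_range, Set.mem_iUnion]
    constructor
    · rintro ⟨c, rfl⟩
      exact ⟨resF E c, maps_D h ((memC c _).2 rfl)⟩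
    · rintro ⟨i, hi⟩
      obtain ⟨c, -, hc⟩ := surj_D h hi
      exact ⟨c, hc⟩
  have rloc : IsLoc (Set.range T) := rng ▸ IsLoc.iUnion Dloc
  have surj_of : μ (Set.range T)ᶜ = 0 → Surjective T := by
    intro h0
    have := null _ rloc.compl h0
    rw [Set.compl_empty_iff] at this
    exact Set.range_eq_univ.1 this
  have surj_of' : μ (Set.range T) = μ Set.univ → Surjective T := by
    intro h0
    apply surj_of
    rw [measure_compl rloc.meas (measure_ne_top _ _), h0, tsub_self]
  have Dd : Injective T → Pairwise (Disjoint on D) := by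
    intro hi i j hij
    refine Set.disjoint_left.2 fun y hy hy' => hij ?_
    obtain ⟨c, hc, rfl⟩ := surj_D h hy
    obtain ⟨c', hc', e⟩ := surj_D h hy'
    have := hi e
    subst this
    rw [← (memC _ _).1 hc, ← (memC _ _).1 hc']
  have h12 : Injective T → Surjective T := by
    intro hi
    apply surj_of'
    rw [rng, measure_iUnion (Dd hi) Dm, tsum_fintype, tot]
  have h21 : Surjective T → Injective T := by
    intro hs a b e
    by_cases hij : resF E a = resF E b
    · exact inj_C h ((memC a _).2 rfl) ((memC b _).2 hij.symm) e
    exfalso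
    have hai : T a ∈ D (resF E a) := maps_D h ((memC a _).2 rfl)
    have hbj : T a ∈ D (resF E b) := e ▸ maps_D h ((memC b _).2 rfl)
    generalize resF E a = i at *
    generalize resF E b = j at *
    have cov : (Set.univ : Set (Cfg d n k)) ⊆
        (⋃ l ∈ Finset.univ.erase i, D l) ∪ (D i \ D j) := by
      intro y _
      have hy : y ∈ ⋃ l, D l := by rw [← rng]; exact hs y
      obtain ⟨l, hl⟩ := Set.mem_iUnion.1 hy
      by_cases hyj : y ∈ D j
      · left
        simp only [Set.mem_iUnion]
        exact ⟨j, by simpa using fun h => hij h.symm, hyj⟩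
      · by_cases hli : l = i
        · right; exact ⟨hli ▸ hl, hyj⟩
        · left
          simp only [Set.mem_iUnion]
          exact ⟨l, by simpa using hli, hl⟩
    have le := (measure_mono (μ := μ) cov).trans ((measure_union_le _ _).trans
      (add_le_add_left (measure_biUnion_finset_le _ _) _))
    rw [← tot, ← Finset.sum_erase_add _ _ (Finset.mem_univ i)] at le
    have le2 : μ (D i) ≤ μ (D i \ D j) :=
      ENNReal.le_of_add_le_add_left
        (ENNReal.sum_ne_top.2 fun l _ => measure_ne_top _ _) le
    have eq := measure_inter_add_sdiff (μ := μ) (D i) (Dm j)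
    have z : μ (D i ∩ D j) = 0 := by
      have h3 : μ (D i ∩ D j) + μ (D i \ D j) ≤ 0 + μ (D i \ D j) := by
        rw [eq, zero_add]; exact le2
      exact le_antisymm (ENNReal.le_of_add_le_add_right (measure_ne_top _ _) h3) bot_le
    have := null _ ((Dloc i).inter (Dloc j)) z
    exact (this ▸ (⟨hai, hbj⟩ : T a ∈ D i ∩ D j) : T a ∈ (∅ : Set (Cfg d n k)))
  have h34 : Bijective T → ∀ A : Set (Cfg d n k), MeasurableSet A → μ (T ⁻¹' A) = μ A := by
    intro hb A hA
    rw [pre A hA, sum_part μ D Dm (Dd hb.1) (by rw [← rng]; exact hb.2.range_eq) hA]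
  tfae_have 1 → 2 := h12
  tfae_have 2 → 3 := fun hs => ⟨h21 hs, hs⟩
  tfae_have 3 → 1 := fun hb => hb.1
  tfae_have 3 → 4 := h34
  tfae_have 4 → 2 := by
    intro h4
    apply surj_of
    rw [← h4 _ rloc.compl.meas]
    convert measure_empty (μ := μ)
    ext c; simp
  tfae_have 3 → 5 := by
    intro hb A hA
    have hm : MeasurableSet (T '' A) := hA.image_of_measurable_injOn hTm hb.1.injOn
    rw [← h34 hb _ hm, Set.preimage_image_eq _ hb.1]
  tfae_have 5 → 2 := by
    intro h5
    apply surj_of'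
    rw [← Set.image_univ]
    exact h5 _ MeasurableSet.univ
  tfae_finish
end

section
/- For all d, k ≥ 1 and n ≥ 2, the group RTM(ℤ^d,n,k) is not finitely generated. -/
open Function

/-- The set of reversible Turing machines, viewed as permutations of `X_{n,k}`. -/
def RTMset (d n k : ℕ) : Set (Equiv.Perm (X d n k)) :=
  {π | IsTM (⇑π) ∧ IsTM (⇑π.symm)}

/-- The group `RTM(ℤ^d,n,k)` of reversible Turing machines (a subgroup of the
permutation group of `X_{n,k}`; the set of reversible Turing machines is closed
under composition and inversion, so it coincides with the subgroup it generates). -/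
def RTMgrp (d n k : ℕ) : Subgroup (Equiv.Perm (X d n k)) :=
  Subgroup.closure (RTMset d n k)

/-- Local permutations: reversible Turing machines that never move the head. -/
def LPset (d n k : ℕ) : Set (Equiv.Perm (X d n k)) :=
  {π | π ∈ RTMset d n k ∧
    ∀ (c : X d n k) (v : V d), ((π c).val.2 v).isSome = (c.val.2 v).isSome}

/-- The group `LP(ℤ^d,n,k)` of local permutations. -/
def LPgrp (d n k : ℕ) : Subgroup (Equiv.Perm (X d n k)) :=
  Subgroup.closure (LPset d n k)

/-- Reversible finite-state automata: reversible Turing machines that never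
change the tape. -/
def RFAset (d n k : ℕ) : Set (Equiv.Perm (X d n k)) :=
  {π | π ∈ RTMset d n k ∧ ∀ c : X d n k, (π c).val.1 = c.val.1}

/-- The group `RFA(ℤ^d,n,k)` of reversible finite-state automata. -/
def RFAgrp (d n k : ℕ) : Subgroup (Equiv.Perm (X d n k)) :=
  Subgroup.closure (RFAset d n k)

/-- State-permutations: reversible machines that never move the head and never
change the tape, only permuting the state as a function of the tape. -/
def SPset (d n k : ℕ) : Set (Equiv.Perm (X d n k)) :=
  {π | π ∈ RTMset d n k ∧ (∀ c : X d n k, (π c).val.1 = c.val.1) ∧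
    ∀ (c : X d n k) (v : V d), ((π c).val.2 v).isSome = (c.val.2 v).isSome}

/-- The group `SP(ℤ^d,n,k)` of state-permutations. -/
def SPgrp (d n k : ℕ) : Subgroup (Equiv.Perm (X d n k)) :=
  Subgroup.closure (SPset d n k)

/-- The machines `T_u` that move the head by `u ∈ ℤ^d` without changing the
tape or the state. -/
def Shiftset (d n k : ℕ) : Set (Equiv.Perm (X d n k)) :=
  {π | ∃ u : V d, ∀ c : X d n k,
    (π c).val.1 = c.val.1 ∧ ∀ t, (π c).val.2 t = c.val.2 (t - u)}

/-- The group `Shift(ℤ^d,n,k)`. -/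
def Shiftgrp (d n k : ℕ) : Subgroup (Equiv.Perm (X d n k)) :=
  Subgroup.closure (Shiftset d n k)

/-- The group `OB(ℤ^d,n,k) = ⟨Shift(ℤ^d,n,k), LP(ℤ^d,n,k)⟩` of oblivious Turing
machines. -/
def OBgrp (d n k : ℕ) : Subgroup (Equiv.Perm (X d n k)) :=
  Subgroup.closure (Shiftset d n k ∪ LPset d n k)

/-- The group `EL(ℤ^d,n,k) = ⟨RFA(ℤ^d,n,k), LP(ℤ^d,n,k)⟩` of elementary Turing
machines. -/
def ELgrp (d n k : ℕ) : Subgroup (Equiv.Perm (X d n k)) :=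
  Subgroup.closure (RFAset d n k ∪ LPset d n k)


open MeasureTheory

abbrev Yc (d n k : ℕ) : Type := (V d → Fin n) × Fin k

def conf {d n k : ℕ} (v : V d) (y : Yc d n k) : X d n k :=
  ⟨(fun t => y.1 (t - v), fun t => if t = v then some y.2 else none), by
    intro a b ha hb
    simp only at ha hb
    split_ifs at ha hb with h1 h2
    · rw [h1, h2]
    · simp at hb
    · simp at ha
    · simp at ha⟩

lemma conf_inj {d n k : ℕ} {v v' : V d} {y y' : Yc d n k} (h : conf v y = conf v' y') :
    v = v' ∧ y = y' := by
  have h1 := congrArg (fun c : X d n k => c.val.1) h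
  have h2 := congrArg (fun c : X d n k => c.val.2 v) h
  simp only [conf, if_true] at h1 h2
  split_ifs at h2 with hv
  subst hv
  refine ⟨rfl, Prod.ext ?_ (by simpa using h2)⟩
  funext t
  have := congrFun h1 (t + v)
  simpa using this

lemma eq_conf {d n k : ℕ} {c : X d n k} {v : V d} {q : Fin k} (h : c.val.2 v = some q) :
    c = conf v (fun u => c.val.1 (u + v), q) := by
  apply Subtype.ext
  apply Prod.ext
  · funext t; simp [conf]
  · funext t
    simp only [conf]
    split_ifs with ht
    · rw [ht, h]
    · by_contra hne
      exact ht (c.2 t v (Option.isSome_iff_ne_none.2 hne) (by simp [h]))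

lemma DefinedBy.conf_eq {d n k : ℕ} {F F' : Finset (V d)}
    {f : (V d → Fin n) → Fin k → (V d → Fin n) × Fin k × V d}
    {T : X d n k → X d n k} (h : DefinedBy F F' f T) (v : V d) (y : Yc d n k) :
    T (conf v y) = conf (v + (f y.1 y.2).2.2)
      (fun t => if t + (f y.1 y.2).2.2 ∈ F' then (f y.1 y.2).1 (t + (f y.1 y.2).2.2)
        else y.1 (t + (f y.1 y.2).2.2), (f y.1 y.2).2.1) := by
  obtain ⟨h1, h2⟩ := h.2.2 (conf v y) v y.2 (by simp [conf])
  have e : (fun u => (conf v y).val.1 (u + v)) = y.1 := by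
    funext u; simp [conf]
  rw [e] at h1 h2
  apply Subtype.ext
  apply Prod.ext
  · funext t
    rw [h1]
    have : t - (v + (f y.1 y.2).2.2) + (f y.1 y.2).2.2 = t - v := by abel
    simp only [conf, this]
  · funext t
    rw [h2]
    simp only [conf]

/-! measure -/

noncomputable def nu (n : ℕ) : Measure (Fin n) := (n : ENNReal)⁻¹ • Measure.count

instance (n : ℕ) [NeZero n] : IsProbabilityMeasure (nu n) := ⟨by
  simp only [nu, Measure.smul_apply, smul_eq_mul]
  rw [Measure.count_apply MeasurableSet.univ]
  simp
  exact ENNReal.inv_mul_cancel (by simpa using NeZero.ne n) (by simp)⟩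

lemma nu_singleton (n : ℕ) (a : Fin n) : nu n {a} = (n : ENNReal)⁻¹ := by
  simp [nu]

lemma nu_perm (n : ℕ) (e : Equiv.Perm (Fin n)) (s : Set (Fin n)) : nu n (e ⁻¹' s) = nu n s := by
  simp only [nu, Measure.smul_apply, smul_eq_mul]
  rw [Measure.count_apply (Set.toFinite _).measurableSet,
    Measure.count_apply (Set.toFinite _).measurableSet, Set.encard_preimage_of_bijective e.bijective]

noncomputable def tapeM (d n : ℕ) [NeZero n] : Measure (V d → Fin n) :=
  Measure.infinitePi (fun _ => nu n)

instance (d n : ℕ) [NeZero n] : IsProbabilityMeasure (tapeM d n) := by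
  unfold tapeM; infer_instance

noncomputable def muY (d n k : ℕ) [NeZero n] : Measure (Yc d n k) :=
  (tapeM d n).prod Measure.count

instance (d n k : ℕ) [NeZero n] : IsFiniteMeasure (muY d n k) := by
  unfold muY; infer_instance

def tapeEquiv {d n : ℕ} (e : V d → Equiv.Perm (Fin n)) (u : V d) :
    (V d → Fin n) ≃ᵐ (V d → Fin n) where
  toFun x t := e (t + u) (x (t + u))
  invFun x t := (e t).symm (x (t - u))
  left_inv x := by funext t; simp
  right_inv x := by funext t; simp
  measurable_toFun := by
    refine measurable_pi_lambda _ fun t => ?_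
    exact (measurable_of_finite (e (t + u))).comp (measurable_pi_apply _)
  measurable_invFun := by
    refine measurable_pi_lambda _ fun t => ?_
    exact (measurable_of_finite (e t).symm).comp (measurable_pi_apply _)

lemma tapeEquiv_mp {d n : ℕ} [NeZero n] (e : V d → Equiv.Perm (Fin n)) (u : V d) :
    MeasurePreserving (tapeEquiv e u) (tapeM d n) (tapeM d n) := by
  refine ⟨(tapeEquiv e u).measurable, ?_⟩
  apply Measure.eq_infinitePi
  intro s t ht
  rw [MeasurableEquiv.map_apply]
  have : (tapeEquiv e u) ⁻¹' (Set.pi s t) =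
      Set.pi (s.map (Equiv.addRight u).toEmbedding : Finset (V d))
        (fun v => (e v) ⁻¹' (t (v - u))) := by
    ext x
    simp only [tapeEquiv, Set.mem_preimage, Set.mem_pi, Finset.mem_coe, Finset.mem_map]
    constructor
    · rintro h _ ⟨a, ha, rfl⟩
      have hc : a + u - u = a := add_sub_cancel_right a u
      change e (a + u) (x (a + u)) ∈ t (a + u - u)
      rw [hc]; exact h a ha
    · intro h a ha
      have hc : a + u - u = a := add_sub_cancel_right a u
      have := h (a + u) ⟨a, ha, rfl⟩
      rw [hc] at this; exact this
  rw [this, tapeM, Measure.infinitePi_pi]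
  · have hc : ∀ a : V d, a + u - u = a := fun a => add_sub_cancel_right a u
    rw [Finset.prod_map]
    refine Finset.prod_congr rfl fun i _ => ?_
    rw [nu_perm]
    change nu n (t (i + u - u)) = _
    rw [hc]
  · intro i _
    exact (Set.toFinite _).measurableSet

def yEquiv {d n k : ℕ} (e : V d → Equiv.Perm (Fin n)) (u : V d) (w : Equiv.Perm (Fin k)) :
    Yc d n k ≃ᵐ Yc d n k :=
  (tapeEquiv e u).prodCongr
    ⟨w, measurable_of_finite _, measurable_of_finite _⟩

lemma yEquiv_mp {d n k : ℕ} [NeZero n] (e : V d → Equiv.Perm (Fin n)) (u : V d)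
    (w : Equiv.Perm (Fin k)) :
    MeasurePreserving (yEquiv e u w) (muY d n k) (muY d n k) := by
  have hw : MeasurePreserving (w : Fin k → Fin k) Measure.count Measure.count := by
    refine ⟨measurable_of_finite _, ?_⟩
    ext s hs
    rw [Measure.map_apply (measurable_of_finite _) hs,
      Measure.count_apply (Set.toFinite _).measurableSet,
      Measure.count_apply (Set.toFinite _).measurableSet,
      Set.encard_preimage_of_bijective w.bijective]
  exact (tapeEquiv_mp e u).prod hw

lemma piecewise_mp {Y ι : Type*} [MeasurableSpace Y] [MeasurableSpace ι] [Finite ι]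
    [MeasurableSingletonClass ι] (μ : Measure Y) (R : ι → Y ≃ᵐ Y)
    (hR : ∀ i, MeasurePreserving (R i) μ μ) (c : Y → ι) (hc : Measurable c) (T : Y → Y)
    (hT : Function.Bijective T) (h : ∀ y, T y = R (c y) y) : MeasurePreserving T μ μ := by
  have : Fintype ι := Fintype.ofFinite ι
  have hC : ∀ i, MeasurableSet (c ⁻¹' {i}) := fun i => hc (measurableSet_singleton i)
  have hTm : Measurable T := by
    have key : ∀ A, T ⁻¹' A = ⋃ i, (c ⁻¹' {i} ∩ R i ⁻¹' A) := by
      intro A; ext y; simp [h]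
    intro A hA
    rw [key]
    exact MeasurableSet.iUnion fun i => (hC i).inter ((R i).measurable hA)
  refine ⟨hTm, ?_⟩
  ext A hA
  rw [Measure.map_apply hTm hA]
  have e1 : T ⁻¹' A = ⋃ i, (c ⁻¹' {i} ∩ R i ⁻¹' A) := by
    ext y; simp [h]
  have e2 : A = ⋃ i, (R i).symm ⁻¹' (c ⁻¹' {i} ∩ R i ⁻¹' A) := by
    ext y
    simp only [Set.mem_iUnion, Set.mem_preimage, Set.mem_inter_iff, Set.mem_singleton_iff,
      MeasurableEquiv.apply_symm_apply]
    constructor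
    · intro hy
      obtain ⟨z, rfl⟩ := hT.2 y
      refine ⟨c z, ?_, hy⟩
      rw [h z]; simp
    · rintro ⟨_, _, hy⟩; exact hy
  rw [e1, measure_iUnion]
  · conv_rhs => rw [e2]
    rw [measure_iUnion]
    · refine tsum_congr fun i => ?_
      rw [((hR i).symm (R i)).measure_preimage_equiv]
    · intro i j hij
      rw [Function.onFun, Set.disjoint_left]
      rintro y ⟨h1, _⟩ ⟨h2, _⟩
      simp only [Set.mem_preimage, Set.mem_singleton_iff] at h1 h2
      have a1 := h ((R i).symm y)
      have a2 := h ((R j).symm y)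
      rw [h1, MeasurableEquiv.apply_symm_apply] at a1
      rw [h2, MeasurableEquiv.apply_symm_apply] at a2
      have := hT.1 (a1.trans a2.symm)
      exact hij (by rw [← h1, ← h2, this])
    · intro i
      exact (R i).symm.measurable ((hC i).inter ((R i).measurable hA))
  · intro i j hij
    rw [Function.onFun, Set.disjoint_left]
    rintro y ⟨h1, _⟩ ⟨h2, _⟩
    exact hij (by rw [← h1, ← h2])
  · intro i
    exact (hC i).inter ((R i).measurable hA)

def win {d n k : ℕ} (W : Finset (V d)) (y : Yc d n k) : (W → Fin n) × Fin k :=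
  (fun v => y.1 v, y.2)

lemma win_meas {d n k : ℕ} (W : Finset (V d)) : Measurable (win (n := n) (k := k) W) := by
  unfold win; fun_prop

lemma win_measure {d n k : ℕ} [NeZero n] (W : Finset (V d)) (j : (W → Fin n) × Fin k) :
    muY d n k (win W ⁻¹' {j}) = ((n : ENNReal)⁻¹) ^ W.card := by
  classical
  have : win W ⁻¹' {j} =
      (Set.pi (W : Set (V d)) (fun v => if h : v ∈ W then {j.1 ⟨v, h⟩} else Set.univ)) ×ˢ {j.2} := by
    ext y
    simp only [win, Set.mem_preimage, Set.mem_singleton_iff, Set.mem_prod, Set.mem_pi,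
      Prod.ext_iff, funext_iff, Finset.mem_coe, Subtype.forall]
    refine and_congr (forall_congr' fun a => forall_congr' fun ha => ?_) Iff.rfl
    simp [ha]
  rw [this, muY, Measure.prod_prod, tapeM, Measure.infinitePi_pi]
  · rw [Finset.prod_congr rfl (g := fun _ => (n : ENNReal)⁻¹)]
    · simp
    · intro v hv
      simp [hv, nu_singleton]
  · intro i _
    exact (Set.toFinite _).measurableSet

lemma win_integral {d n k : ℕ} [NeZero n] (W : Finset (V d)) (g : (W → Fin n) × Fin k → ℝ) :
    Integrable (fun y => g (win W y)) (muY d n k) ∧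
    ∫ y, g (win W y) ∂(muY d n k) = ((n : ℝ)⁻¹) ^ W.card * ∑ j, g j := by
  have hi : Integrable g ((muY d n k).map (win W)) := by
    have := Measure.isFiniteMeasure_map (muY d n k) (win W)
    exact Integrable.of_finite
  constructor
  · exact hi.comp_measurable (win_meas W)
  · rw [← integral_map (φ := win W) (f := g) (win_meas W).aemeasurable hi.1, integral_fintype hi,
      Finset.mul_sum]
    refine Finset.sum_congr rfl fun j _ => ?_
    rw [Measure.real, Measure.map_apply (win_meas W) (measurableSet_singleton j), win_measure]
    simp

/-! homomorphism -/

def HH {d n k : ℕ} [NeZero n] [NeZero d] (π : Equiv.Perm (X d n k)) (a : ℝ) : Prop :=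
  ∃ (φ : Yc d n k → Yc d n k) (s : Yc d n k → V d),
    (∀ v y, π (conf v y) = conf (v + s y) (φ y)) ∧ MeasurePreserving φ (muY d n k) (muY d n k) ∧
    Integrable (fun y => ((s y 0 : ℤ) : ℝ)) (muY d n k) ∧
    ∫ y, ((s y 0 : ℤ) : ℝ) ∂(muY d n k) = a

lemma HH.unique {d n k : ℕ} [NeZero n] [NeZero d] {π : Equiv.Perm (X d n k)} {a b : ℝ}
    (ha : HH π a) (hb : HH π b) : a = b := by
  obtain ⟨φ, s, h, -, -, rfl⟩ := ha
  obtain ⟨φ', s', h', -, -, rfl⟩ := hb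
  congr 1
  funext y
  have := (conf_inj ((h 0 y).symm.trans (h' 0 y))).1
  simp only [zero_add] at this
  rw [this]

lemma HH.one {d n k : ℕ} [NeZero n] [NeZero d] : HH (1 : Equiv.Perm (X d n k)) 0 :=
  ⟨id, fun _ => 0, by simp, MeasurePreserving.id _, by simp, by simp⟩

lemma HH.mul {d n k : ℕ} [NeZero n] [NeZero d] {π ρ : Equiv.Perm (X d n k)} {a b : ℝ}
    (ha : HH π a) (hb : HH ρ b) : HH (π * ρ) (a + b) := by
  obtain ⟨φ, s, h, hm, hi, rfl⟩ := ha
  obtain ⟨φ', s', h', hm', hi', rfl⟩ := hb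
  have hi2 : Integrable (fun y => ((s (φ' y) 0 : ℤ) : ℝ)) (muY d n k) :=
    hm'.integrable_comp_of_integrable hi
  refine ⟨φ ∘ φ', fun y => s (φ' y) + s' y, ?_, hm.comp hm', ?_, ?_⟩
  · intro v y
    simp only [Equiv.Perm.mul_apply, h', h, Function.comp]
    congr 1
    abel
  · simp only [Pi.add_apply, Int.cast_add]
    exact hi2.add hi'
  · simp only [Pi.add_apply, Int.cast_add]
    rw [integral_add hi2 hi']
    congr 1
    have e := integral_map (μ := muY d n k) (φ := φ') (f := fun y => ((s y 0 : ℤ) : ℝ))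
      hm'.measurable.aemeasurable (by rw [hm'.map_eq]; exact hi.1)
    rw [hm'.map_eq] at e
    exact e.symm

lemma HH_of_RTM {d n k : ℕ} [NeZero n] [NeZero d] {π : Equiv.Perm (X d n k)}
    (hπ : π ∈ RTMset d n k) : ∃ (a : ℝ) (D : ℕ) (m : ℤ), 0 < D ∧ HH π a ∧ D * a = m := by
  classical
  obtain ⟨⟨F, F', f, hf⟩, ⟨G, G', g, hg⟩⟩ := hπ
  have e1 := hf.conf_eq
  have e2 := hg.conf_eq
  set φ : Yc d n k → Yc d n k := fun y =>
    (fun t => if t + (f y.1 y.2).2.2 ∈ F' then (f y.1 y.2).1 (t + (f y.1 y.2).2.2)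
        else y.1 (t + (f y.1 y.2).2.2), (f y.1 y.2).2.1) with hφ
  set ψ : Yc d n k → Yc d n k := fun y =>
    (fun t => if t + (g y.1 y.2).2.2 ∈ G' then (g y.1 y.2).1 (t + (g y.1 y.2).2.2)
        else y.1 (t + (g y.1 y.2).2.2), (g y.1 y.2).2.1) with hψ
  replace e1 : ∀ v y, π (conf v y) = conf (v + (f y.1 y.2).2.2) (φ y) := e1
  replace e2 : ∀ v y, π.symm (conf v y) = conf (v + (g y.1 y.2).2.2) (ψ y) := e2
  have i1 : ∀ y, ψ (φ y) = y := by
    intro y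
    have h := π.symm_apply_apply (conf 0 y)
    rw [e1, e2] at h
    exact (conf_inj h).2
  have i2 : ∀ y, φ (ψ y) = y := by
    intro y
    have h := π.apply_symm_apply (conf 0 y)
    rw [e2, e1] at h
    exact (conf_inj h).2
  have hb : Function.Bijective φ := Function.bijective_iff_has_inverse.2 ⟨ψ, i1, i2⟩
  set W := F ∪ F' with hW
  let ex : (W → Fin n) → (V d → Fin n) := fun p v => if h : v ∈ W then p ⟨v, h⟩ else 0
  have hex : ∀ y : Yc d n k, ∀ v ∈ W, ex (win W y).1 v = y.1 v := by
    intro y v hv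
    simp [ex, hv, win]
  have hloc : ∀ y : Yc d n k, (∀ v ∈ F', (f y.1 y.2).1 v = (f (ex (win W y).1) y.2).1 v) ∧
      (f y.1 y.2).2 = (f (ex (win W y).1) y.2).2 := by
    intro y
    apply hf.1
    intro v hv
    exact (hex y v (Finset.mem_union_left _ hv)).symm
  let R : (W → Fin n) × Fin k → (Yc d n k ≃ᵐ Yc d n k) := fun j =>
    yEquiv (fun v => if v ∈ F' then Equiv.swap (ex j.1 v) ((f (ex j.1) j.2).1 v) else 1)
      (f (ex j.1) j.2).2.2 (Equiv.swap j.2 (f (ex j.1) j.2).2.1)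
  have hmp : MeasurePreserving φ (muY d n k) (muY d n k) := by
    refine piecewise_mp (muY d n k) R (fun j => yEquiv_mp _ _ _) (win W) (win_meas W) φ hb ?_
    intro y
    obtain ⟨l1, l2⟩ := hloc y
    have w2 : (win W y).2 = y.2 := rfl
    apply Prod.ext
    · funext t
      change (if t + (f y.1 y.2).2.2 ∈ F' then (f y.1 y.2).1 (t + (f y.1 y.2).2.2)
        else y.1 (t + (f y.1 y.2).2.2)) =
        (if t + (f (ex (win W y).1) y.2).2.2 ∈ F' then
          Equiv.swap (ex (win W y).1 (t + (f (ex (win W y).1) y.2).2.2))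
            ((f (ex (win W y).1) y.2).1 (t + (f (ex (win W y).1) y.2).2.2)) else 1)
          (y.1 (t + (f (ex (win W y).1) y.2).2.2))
      rw [← l2]
      split_ifs with ht
      · rw [hex y _ (Finset.mem_union_right _ ht), Equiv.swap_apply_left, l1 _ ht]
      · rfl
    · change (f y.1 y.2).2.1 = Equiv.swap y.2 (f (ex (win W y).1) y.2).2.1 y.2
      rw [Equiv.swap_apply_left, l2]
  have hs : (fun y : Yc d n k => (((f y.1 y.2).2.2 0 : ℤ) : ℝ)) =
      fun y => (fun j : (W → Fin n) × Fin k => (((f (ex j.1) j.2).2.2 0 : ℤ) : ℝ)) (win W y) := by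
    funext y
    rw [(hloc y).2]
    rfl
  obtain ⟨j1, j2⟩ := win_integral (d := d) (n := n) (k := k) W
    (fun j : (W → Fin n) × Fin k => (((f (ex j.1) j.2).2.2 0 : ℤ) : ℝ))
  rw [← hs] at j1 j2
  refine ⟨_, n ^ W.card, ∑ j : (W → Fin n) × Fin k, (f (ex j.1) j.2).2.2 0,
    pow_pos (NeZero.pos n) _, ⟨φ, fun y => (f y.1 y.2).2.2, e1, hmp, j1, rfl⟩, ?_⟩
  rw [j2]
  have : (n : ℝ) ≠ 0 := by exact_mod_cast NeZero.ne n
  push_cast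
  rw [← mul_assoc, ← mul_pow, mul_inv_cancel₀ this, one_pow, one_mul]

lemma RTMset_inv {d n k : ℕ} {π : Equiv.Perm (X d n k)} (h : π ∈ RTMset d n k) :
    π⁻¹ ∈ RTMset d n k := ⟨h.2, h.1⟩

def QQ {d n k : ℕ} [NeZero n] [NeZero d] (D : ℕ) (π : Equiv.Perm (X d n k)) : Prop :=
  ∃ (a : ℝ) (m : ℤ), HH π a ∧ HH π⁻¹ (-a) ∧ D * a = m

lemma QQ.one {d n k : ℕ} [NeZero n] [NeZero d] (D : ℕ) : QQ D (1 : Equiv.Perm (X d n k)) :=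
  ⟨0, 0, HH.one, by simpa using HH.one, by simp⟩

lemma QQ.inv {d n k : ℕ} [NeZero n] [NeZero d] {D : ℕ} {π : Equiv.Perm (X d n k)}
    (h : QQ D π) : QQ D π⁻¹ := by
  obtain ⟨a, m, h1, h2, h3⟩ := h
  exact ⟨-a, -m, h2, by simpa using h1, by push_cast; rw [← h3]; ring⟩

lemma QQ.mul {d n k : ℕ} [NeZero n] [NeZero d] {D : ℕ} {π ρ : Equiv.Perm (X d n k)}
    (h : QQ D π) (h' : QQ D ρ) : QQ D (π * ρ) := by
  obtain ⟨a, m, h1, h2, h3⟩ := h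
  obtain ⟨a', m', h1', h2', h3'⟩ := h'
  refine ⟨a + a', m + m', h1.mul h1', ?_, by push_cast; rw [← h3, ← h3']; ring⟩
  rw [mul_inv_rev, neg_add_rev]
  exact h2'.mul h2

lemma QQ.dvd {d n k : ℕ} [NeZero n] [NeZero d] {D E : ℕ} {π : Equiv.Perm (X d n k)}
    (h : QQ D π) (hd : D ∣ E) : QQ E π := by
  obtain ⟨a, m, h1, h2, h3⟩ := h
  obtain ⟨c, rfl⟩ := hd
  exact ⟨a, c * m, h1, h2, by push_cast; rw [← h3]; ring⟩

lemma QQ_of_RTM {d n k : ℕ} [NeZero n] [NeZero d] {π : Equiv.Perm (X d n k)}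
    (h : π ∈ RTMset d n k) : ∃ D, 0 < D ∧ QQ D π := by
  obtain ⟨a, D, m, hD, h1, h2⟩ := HH_of_RTM h
  obtain ⟨b, _, _, _, h3, _⟩ := HH_of_RTM (RTMset_inv h)
  have h4 := h1.mul h3
  rw [mul_inv_cancel] at h4
  have : b = -a := by linarith [h4.unique HH.one]
  subst this
  exact ⟨D, hD, a, m, h1, h3, h2⟩

lemma QQ_of_grp {d n k : ℕ} [NeZero n] [NeZero d] {π : Equiv.Perm (X d n k)}
    (h : π ∈ RTMgrp d n k) : ∃ D, 0 < D ∧ QQ D π := by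
  unfold RTMgrp at h
  induction h using Subgroup.closure_induction with
  | mem x hx => exact QQ_of_RTM hx
  | one => exact ⟨1, one_pos, QQ.one 1⟩
  | mul x y _ _ hx hy =>
    obtain ⟨D, hD, h⟩ := hx
    obtain ⟨E, hE, h'⟩ := hy
    exact ⟨D * E, Nat.mul_pos hD hE, (h.dvd ⟨E, rfl⟩).mul (h'.dvd ⟨D, mul_comm _ _⟩)⟩
  | inv x _ hx =>
    obtain ⟨D, hD, h⟩ := hx
    exact ⟨D, hD, h.inv⟩

lemma QQ_of_FG {d n k : ℕ} [NeZero n] [NeZero d] (h : (RTMgrp d n k).FG) :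
    ∃ D, 0 < D ∧ ∀ π ∈ RTMgrp d n k, QQ D π := by
  classical
  obtain ⟨S, hS⟩ := h
  have hx : ∀ π : Equiv.Perm (X d n k), ∃ D, 0 < D ∧ (π ∈ S → QQ D π) := by
    intro π
    by_cases hp : π ∈ S
    · obtain ⟨D, hD, h⟩ := QQ_of_grp (hS ▸ Subgroup.subset_closure hp : π ∈ RTMgrp d n k)
      exact ⟨D, hD, fun _ => h⟩
    · exact ⟨1, one_pos, fun h => absurd h hp⟩
  choose D hD hQ using hx
  refine ⟨∏ π ∈ S, D π, Finset.prod_pos fun π _ => hD π, ?_⟩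
  intro π hπ
  rw [← hS] at hπ
  induction hπ using Subgroup.closure_induction with
  | mem x hx => exact (hQ x hx).dvd (Finset.dvd_prod_of_mem D hx)
  | one => exact QQ.one _
  | mul x y _ _ hx hy => exact hx.mul hy
  | inv x _ hx => exact hx.inv

/-! surfing machine -/

open Classical in
noncomputable def liftMap {d n k : ℕ} (φ : Yc d n k → Yc d n k) (s : Yc d n k → V d)
    (c : X d n k) : X d n k :=
  if h : ∃ p : V d × Yc d n k, c = conf p.1 p.2 then
    conf (h.choose.1 + s h.choose.2) (φ h.choose.2) else c

lemma liftMap_conf {d n k : ℕ} (φ : Yc d n k → Yc d n k) (s : Yc d n k → V d) (v : V d)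
    (y : Yc d n k) : liftMap φ s (conf v y) = conf (v + s y) (φ y) := by
  have h : ∃ p : V d × Yc d n k, conf v y = conf p.1 p.2 := ⟨(v, y), rfl⟩
  unfold liftMap
  rw [dif_pos h]
  obtain ⟨h1, h2⟩ := conf_inj h.choose_spec
  rw [← h1, ← h2]

lemma liftMap_none {d n k : ℕ} (φ : Yc d n k → Yc d n k) (s : Yc d n k → V d) (c : X d n k)
    (h : ¬ ∃ p : V d × Yc d n k, c = conf p.1 p.2) : liftMap φ s c = c := by
  unfold liftMap
  rw [dif_neg h]

lemma liftMap_inv {d n k : ℕ} (φ ψ : Yc d n k → Yc d n k) (s r : Yc d n k → V d)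
    (h : ∀ y, ψ (φ y) = y) (h' : ∀ y, s y + r (φ y) = 0) (c : X d n k) :
    liftMap ψ r (liftMap φ s c) = c := by
  by_cases hc : ∃ p : V d × Yc d n k, c = conf p.1 p.2
  · obtain ⟨⟨v, y⟩, rfl⟩ := hc
    simp only [liftMap_conf, h, add_assoc, h', add_zero]
  · rw [liftMap_none _ _ c hc, liftMap_none _ _ c hc]

/-- Local machine: swap the tape cells by `w`, and move by `u`, if the cells `0..m-1` along
the direction `e` vanish. -/
def ruleOf {d n k : ℕ} (P : (V d → Fin n) → Prop) [DecidablePred P] (w : Equiv.Perm (V d))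
    (u : V d) (x : V d → Fin n) (q : Fin k) : (V d → Fin n) × Fin k × V d :=
  if P x then (fun t => x (w t), q, u) else (x, q, 0)

def phiOf {d n k : ℕ} (P : (V d → Fin n) → Prop) [DecidablePred P] (w : Equiv.Perm (V d))
    (u : V d) (y : Yc d n k) : Yc d n k :=
  if P y.1 then (fun t => y.1 (w (t + u)), y.2) else y

def sOf {d n k : ℕ} (P : (V d → Fin n) → Prop) [DecidablePred P]
    (u : V d) (y : Yc d n k) : V d := if P y.1 then u else 0

lemma isTM_lift {d n k : ℕ} (P : (V d → Fin n) → Prop) [DecidablePred P] (W : Finset (V d))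
    (hP : ∀ x x', (∀ v ∈ W, x v = x' v) → (P x ↔ P x')) (w : Equiv.Perm (V d)) (u : V d)
    (hw : ∀ v, v ∈ W → w v ∈ W) (hw' : ∀ v, v ∉ W → w v = v) :
    IsTM (liftMap (phiOf (k := k) P w u) (sOf P u)) := by
  refine ⟨W, W, ruleOf P w u, ?_, ?_, ?_⟩
  · intro x x' q h
    by_cases hx : P x
    · have hx' := (hP x x' h).1 hx
      simp only [ruleOf, hx, hx', if_true, and_true]
      intro v hv
      exact h _ (hw v hv)
    · have hx' := (hP x x' h).not.1 hx
      simp only [ruleOf, hx, hx', if_false, and_true]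
      exact h
  · intro c hc
    apply liftMap_none
    rintro ⟨p, rfl⟩
    have := hc p.1
    simp [conf] at this
  · intro c v q hc
    have e := eq_conf hc
    set x : V d → Fin n := fun u => c.val.1 (u + v) with hx
    have ec : ∀ t, c.val.1 t = x (t - v) := by intro t; simp [hx]
    have e3 : liftMap (phiOf (k := k) P w u) (sOf P u) c =
      conf (v + sOf P u (x, q)) (phiOf P w u (x, q)) := by rw [e, liftMap_conf]
    rw [e3]
    by_cases hp : P x
    · simp only [ruleOf, phiOf, sOf, hp, if_true, conf, implies_true, and_true]
      intro t
      have : t - (v + u) + u = t - v := by abel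
      rw [this, ec]
      split_ifs with ht
      · rfl
      · rw [hw' _ ht]
    · simp only [ruleOf, phiOf, sOf, hp, if_false, conf, implies_true, and_true]
      intro t
      simp [ec]

section surf
variable {d n k : ℕ} [NeZero n] [NeZero d]

def cell (d : ℕ) [NeZero d] (i : ℤ) : V d := Pi.single 0 i

lemma cell_inj {i j : ℤ} : cell d i = cell d j ↔ i = j :=
  (Pi.single_injective (M := fun _ : Fin d => ℤ) 0).eq_iff

lemma cell_add (i j : ℤ) : cell d i + cell d j = cell d (i + j) := by
  simp [cell, Pi.single_add]

lemma cell_zero : cell d 0 = 0 := by simp [cell]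

def PP (m : ℕ) (x : V d → Fin n) : Prop := ∀ i ∈ Finset.range m, x (cell d i) = 0

instance (m : ℕ) : DecidablePred (PP (d := d) (n := n) m) := fun x => by
  unfold PP; infer_instance

noncomputable def WW (d m : ℕ) [NeZero d] : Finset (V d) := (Finset.Icc (-1 : ℤ) m).image (cell d)

lemma PP_loc (m : ℕ) (x x' : V d → Fin n) (h : ∀ v ∈ WW d m, x v = x' v) : PP m x ↔ PP m x' := by
  unfold PP
  refine forall_congr' fun i => forall_congr' fun hi => ?_
  rw [h]
  have := Finset.mem_range.1 hi
  exact Finset.mem_image_of_mem _ (Finset.mem_Icc.2 (by omega))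

lemma swap_mem {m : ℕ} {i j : ℤ} (hi : i ∈ Finset.Icc (-1 : ℤ) m) (hj : j ∈ Finset.Icc (-1 : ℤ) m)
    (v : V d) : (v ∈ WW d m → Equiv.swap (cell d i) (cell d j) v ∈ WW d m) ∧
      (v ∉ WW d m → Equiv.swap (cell d i) (cell d j) v = v) := by
  have h1 : cell d i ∈ WW d m := Finset.mem_image_of_mem _ hi
  have h2 : cell d j ∈ WW d m := Finset.mem_image_of_mem _ hj
  constructor
  · intro h
    rw [Equiv.swap_apply_def]
    split_ifs <;> assumption
  · intro h
    apply Equiv.swap_apply_of_ne_of_ne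
    · rintro rfl; exact h h1
    · rintro rfl; exact h h2

noncomputable def phi1 (m : ℕ) : Yc d n k → Yc d n k :=
  phiOf (PP m) (Equiv.swap (cell d 0) (cell d m)) (cell d 1)
noncomputable def phi2 (m : ℕ) : Yc d n k → Yc d n k :=
  phiOf (PP m) (Equiv.swap (cell d (-1)) (cell d (m - 1))) (cell d (-1))

lemma swap_shift (a b c : ℤ) (t : V d) :
    Equiv.swap (cell d a) (cell d b) (t + cell d c) =
      Equiv.swap (cell d (a - c)) (cell d (b - c)) t + cell d c := by
  have ha : cell d a = cell d (a - c) + cell d c := by rw [cell_add]; simp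
  have hb : cell d b = cell d (b - c) + cell d c := by rw [cell_add]; simp
  rw [ha, hb]
  simp only [Equiv.swap_apply_def, add_left_inj]
  split_ifs <;> rfl

lemma PP1 {m : ℕ} (hm : 1 ≤ m) {x : V d → Fin n} (h : PP m x) :
    PP m (fun t => x (Equiv.swap (cell d 0) (cell d m) (t + cell d 1))) := by
  intro i hi
  have hi := Finset.mem_range.1 hi
  simp only [cell_add]
  by_cases h1 : i + 1 = m
  · rw [show ((i : ℤ) + 1) = m by omega, Equiv.swap_apply_right]
    exact h 0 (Finset.mem_range.2 hm)
  · rw [Equiv.swap_apply_of_ne_of_ne]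
    · exact_mod_cast h (i + 1) (Finset.mem_range.2 (by omega))
    · rw [Ne, cell_inj]; omega
    · rw [Ne, cell_inj]; omega

lemma PP2 {m : ℕ} (hm : 1 ≤ m) {x : V d → Fin n} (h : PP m x) :
    PP m (fun t => x (Equiv.swap (cell d (-1)) (cell d (m - 1)) (t + cell d (-1)))) := by
  intro i hi
  have hi := Finset.mem_range.1 hi
  simp only [cell_add]
  by_cases h1 : i = 0
  · rw [show ((i : ℤ) + -1) = -1 by omega, Equiv.swap_apply_left]
    have := h (m - 1) (Finset.mem_range.2 (by omega))
    rwa [Nat.cast_sub hm, Nat.cast_one] at this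
  · rw [Equiv.swap_apply_of_ne_of_ne]
    · have := h (i - 1) (Finset.mem_range.2 (by omega))
      rwa [Nat.cast_sub (by omega), Nat.cast_one] at this
    · rw [Ne, cell_inj]; omega
    · rw [Ne, cell_inj]; omega

lemma phi21 {m : ℕ} (hm : 1 ≤ m) (y : Yc d n k) : phi2 m (phi1 m y) = y ∧
    sOf (PP m) (cell d 1) y + sOf (PP m) (cell d (-1)) (phi1 m y) = 0 := by
  by_cases h : PP m y.1
  · have h' := PP1 hm h
    constructor
    · simp only [phi1, phi2, phiOf, h, h', if_true]
      apply Prod.ext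
      · funext t
        simp only
        rw [swap_shift 0 m 1, zero_sub, Equiv.swap_apply_self, add_assoc, cell_add]
        simp [cell_zero]
      · rfl
    · simp only [phi1, phiOf, sOf, h, h', if_true, cell_add]
      simp [cell_zero]
  · simp [phi1, phi2, phiOf, sOf, h]

lemma phi12 {m : ℕ} (hm : 1 ≤ m) (y : Yc d n k) : phi1 m (phi2 m y) = y ∧
    sOf (PP m) (cell d (-1)) y + sOf (PP m) (cell d 1) (phi2 m y) = 0 := by
  by_cases h : PP m y.1
  · have h' := PP2 hm h
    constructor
    · simp only [phi1, phi2, phiOf, h, h', if_true]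
      apply Prod.ext
      · funext t
        simp only
        rw [swap_shift (-1) (m - 1) (-1), show (-1 - -1 : ℤ) = 0 by ring,
          show ((m : ℤ) - 1 - -1) = m by ring, Equiv.swap_apply_self, add_assoc, cell_add]
        simp [cell_zero]
      · rfl
    · simp only [phi2, phiOf, sOf, h, h', if_true, cell_add]
      simp [cell_zero]
  · simp [phi1, phi2, phiOf, sOf, h]

noncomputable def surf (d n k : ℕ) [NeZero n] [NeZero d] (m : ℕ) (hm : 1 ≤ m) :
    Equiv.Perm (X d n k) where
  toFun := liftMap (phi1 m) (sOf (PP m) (cell d 1))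
  invFun := liftMap (phi2 m) (sOf (PP m) (cell d (-1)))
  left_inv := liftMap_inv _ _ _ _ (fun y => (phi21 hm y).1) (fun y => (phi21 hm y).2)
  right_inv := liftMap_inv _ _ _ _ (fun y => (phi12 hm y).1) (fun y => (phi12 hm y).2)

lemma surf_mem (m : ℕ) (hm : 1 ≤ m) : surf d n k m hm ∈ RTMset d n k := by
  constructor
  · have h := swap_mem (d := d) (m := m) (i := 0) (j := m) (Finset.mem_Icc.2 (by omega))
      (Finset.mem_Icc.2 (by omega))
    exact isTM_lift (PP m) (WW d m) (PP_loc m) _ _ (fun v => (h v).1) (fun v => (h v).2)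
  · have h := swap_mem (d := d) (m := m) (i := -1) (j := m - 1) (Finset.mem_Icc.2 (by omega))
      (Finset.mem_Icc.2 (by omega))
    exact isTM_lift (PP m) (WW d m) (PP_loc m) _ _ (fun v => (h v).1) (fun v => (h v).2)

lemma surf_HH (m : ℕ) (hm : 1 ≤ m) {a : ℝ} (h : HH (surf d n k m hm) a) :
    a = ((n : ℝ)⁻¹) ^ m * k := by
  classical
  obtain ⟨φ, s, h1, -, -, rfl⟩ := h
  have hs : ∀ y, s y = sOf (PP m) (cell d 1) y := by
    intro y
    have e : surf d n k m hm (conf 0 y) = conf (0 + sOf (PP m) (cell d 1) y) (phi1 m y) :=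
      liftMap_conf _ _ _ _
    have := (conf_inj ((h1 0 y).symm.trans e)).1
    simpa using this
  let W : Finset (V d) := (Finset.range m).image (fun i : ℕ => cell d i)
  have hW : W.card = m := by
    rw [Finset.card_image_of_injective, Finset.card_range]
    intro i j hij
    exact_mod_cast cell_inj.1 hij
  let g : (W → Fin n) × Fin k → ℝ := fun j => if j.1 = 0 then 1 else 0
  have hg : (fun y => ((s y 0 : ℤ) : ℝ)) = fun y => g (win W y) := by
    funext y
    have : PP m y.1 ↔ (win W y).1 = 0 := by
      constructor
      · intro h
        funext ⟨v, hv⟩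
        obtain ⟨i, hi, rfl⟩ := Finset.mem_image.1 hv
        exact h i hi
      · intro h i hi
        exact congrFun h ⟨_, Finset.mem_image_of_mem _ hi⟩
    rw [hs]
    simp only [sOf, g, ← this]
    split_ifs <;> simp [cell]
  rw [hg, (win_integral W g).2, hW, Fintype.sum_prod_type, Finset.sum_comm]
  simp [g]

end surf

/-- For `n ≥ 2`, the group `RTM(ℤ^d,n,k)` is not finitely generated. -/
theorem rtm_not_finitelyGenerated (d n k : ℕ) (hd : 1 ≤ d) (hn : 2 ≤ n) (hk : 1 ≤ k) :
    ¬ (RTMgrp d n k).FG := by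
  intro hFG
  have : NeZero d := ⟨by omega⟩
  have : NeZero n := ⟨by omega⟩
  obtain ⟨D, hD, hQ⟩ := QQ_of_FG hFG
  have hm : 1 ≤ D * k + 1 := by omega
  obtain ⟨a, z, h1, -, h3⟩ := hQ (surf d n k (D * k + 1) hm)
    (Subgroup.subset_closure (surf_mem _ hm))
  rw [surf_HH _ hm h1] at h3
  have hn0 : (0 : ℝ) < n := by exact_mod_cast (by omega : 0 < n)
  have h4 : ((D * k : ℕ) : ℝ) = z * (n : ℝ) ^ (D * k + 1) := by
    rw [← h3]
    have e : ((n : ℝ)⁻¹) ^ (D * k + 1) * (n : ℝ) ^ (D * k + 1) = 1 := by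
      rw [← mul_pow, inv_mul_cancel₀ hn0.ne', one_pow]
    push_cast
    linear_combination (-(D : ℝ) * k) * e
  have h5 : ((D * k : ℕ) : ℤ) = z * (n : ℤ) ^ (D * k + 1) := by exact_mod_cast h4
  have h6 : D * k < n ^ (D * k + 1) :=
    lt_of_lt_of_le (Nat.lt_succ_self _) (Nat.lt_pow_self hn).le
  have h7 : (n ^ (D * k + 1)) ∣ D * k := by
    have : ((n ^ (D * k + 1) : ℕ) : ℤ) ∣ ((D * k : ℕ) : ℤ) := ⟨z, by rw [h5]; push_cast; ring⟩
    exact_mod_cast this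
  have := Nat.le_of_dvd (Nat.mul_pos hD hk) h7
  omega
end
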